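/- Variational characterization of σ^A: let α, ν₁, …, ν_n be real values and let σ^A be the unique Beppo Levi L₀-spline on ρ with σ^A(r_j) = ν_j for all j and σ^A(0) = α. If f ∈ Λ₀ satisfies f(r_j) = ν_j for all j ∈ {1,…,n} and f(0) = α, and f ≠ σ^A, then ‖σ^A‖₀ < ‖f‖₀. -/

import Mathlib

open MeasureTheory Set Filter

noncomputable section

/-- The radial Beppo Levi energy space `Λ₀`: functions `f : (0,∞) → ℂ` of class `C¹`
whose derivative `f′` is locally absolutely continuous on compact subintervals of `(0,∞)`
(encoded by the fundamental theorem of calculus with an integrable density `f″`),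
and whose radial Beppo Levi energy `∫₀^∞ ( r·|f″(r)|² + (1/r)·|f′(r)|² ) dr` is finite. -/
structure Lambda0 where
  f : ℝ → ℂ
  f' : ℝ → ℂ
  f'' : ℝ → ℂ
  hasDeriv : ∀ r ∈ Set.Ioi (0:ℝ), HasDerivAt f (f' r) r
  contDeriv : ContinuousOn f' (Set.Ioi 0)
  locAC : ∀ a b : ℝ, 0 < a → a ≤ b →
    MeasureTheory.IntegrableOn f'' (Set.Icc a b) ∧
      ∀ x ∈ Set.Icc a b, f' x = f' a + ∫ t in a..x, f'' t
  energyFin : MeasureTheory.IntegrableOn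
    (fun r : ℝ => r * ‖f'' r‖ ^ 2 + (1 / r) * ‖f' r‖ ^ 2) (Set.Ioi 0)

/-- The squared radial Beppo Levi energy `‖·‖₀²` of a function with first derivative `g'`
and second derivative `g''`. -/
def energySq (g' g'' : ℝ → ℂ) : ℝ :=
  ∫ r in Set.Ioi (0:ℝ), (r * ‖g'' r‖ ^ 2 + (1 / r) * ‖g' r‖ ^ 2)

/-- The seminorm `‖f‖₀`. -/
def Lambda0.seminorm0 (F : Lambda0) : ℝ :=
  Real.sqrt (energySq F.f' F.f'')

/-- The semi-inner product `⟨f,g⟩₀`. -/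
def innerBL (F G : Lambda0) : ℂ :=
  ∫ r in Set.Ioi (0:ℝ),
    ((r : ℂ) * F.f'' r * (starRingEnd ℂ) (G.f'' r) +
      (1 / (r : ℂ)) * F.f' r * (starRingEnd ℂ) (G.f' r))

/-- A Beppo Levi `L₀`-spline on the positive knots `r 1 < r 2 < … < r n`:
piecewise of the form `a·x² + b·x²·ln x + c + d·ln x` between consecutive knots,
of the form `a·x² + b·x²·ln x + c` on `(0, r 1)`, of the form `c + d·ln x` on `(r n, ∞)`,
`C²` throughout `(0,∞)`, and continuously extended at `0`. -/
structure IsBLSpline (n : ℕ) (r : ℕ → ℝ) (η : ℝ → ℂ) : Prop where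
  pieces : ∀ j : ℕ, 1 ≤ j → j + 1 ≤ n → ∃ a b c d : ℂ,
    ∀ x ∈ Set.Ioo (r j) (r (j + 1)),
      η x = a * (x : ℂ) ^ 2 + b * (x : ℂ) ^ 2 * (Real.log x : ℂ) + c + d * (Real.log x : ℂ)
  left : ∃ a b c : ℂ, ∀ x ∈ Set.Ioo (0 : ℝ) (r 1),
      η x = a * (x : ℂ) ^ 2 + b * (x : ℂ) ^ 2 * (Real.log x : ℂ) + c
  right : ∃ c d : ℂ, ∀ x ∈ Set.Ioi (r n), η x = c + d * (Real.log x : ℂ)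
  smooth : ContDiffOn ℝ 2 η (Set.Ioi 0)
  cont0 : ContinuousWithinAt η (Set.Ici 0) 0

/-- A Beppo Levi `L₀`-spline is non-singular if on `(0, r₁)` it has the form `a·x² + c`. -/
def NonSingularBLS (r1 : ℝ) (η : ℝ → ℂ) : Prop :=
  ∃ a c : ℂ, ∀ x ∈ Set.Ioo (0 : ℝ) r1, η x = a * (x : ℂ) ^ 2 + c

/-- Rabut's kernel `K`. -/
def Kfun (r t : ℝ) : ℝ :=
  if r ≤ t then 0 else (1 / 4) * (t ^ 2 - r ^ 2 + (r ^ 2 + t ^ 2) * Real.log (r / t))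

/-- The limiting kernel `H_{0,∞}` (with left endpoint knot `r1`). -/
def Hfun (r1 r t : ℝ) : ℝ :=
  Kfun r t - Kfun r r1 - Kfun r1 t + (1 / 4) * (r ^ 2 - r1 ^ 2) * Real.log (t / r1)

/-- The basis function `φ₀`. -/
def phi0 (r : ℝ) : ℝ :=
  if r ≤ 1 then r ^ 2 - r ^ 2 * Real.log r else 1 + Real.log r

/-- Johnson's compactly supported profile `η₂`. -/
def eta2 (x : ℝ) : ℂ :=
  (((4 / 3 : ℝ) * (Real.log 2 - phi0 x + phi0 (x / 2)) : ℝ) : ℂ)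

/-- The non-singular compactly supported profile `β`. -/
def betaFn (x : ℝ) : ℂ :=
  (((1 / 5 : ℝ) * (27 * Real.log 3 - 32 * Real.log 2 + 5 * phi0 x
      - 32 * phi0 (x / 2) + 27 * phi0 (x / 3)) : ℝ) : ℂ)

/-- `Ker L₀ = span{r², r² ln r, 1, ln r}`, as functions on `(0,∞)`. -/
def KerL0 : Set (ℝ → ℂ) :=
  {η | ∃ a b c d : ℂ, ∀ x : ℝ, 0 < x →
    η x = a * (x : ℂ) ^ 2 + b * (x : ℂ) ^ 2 * (Real.log x : ℂ) + c + d * (Real.log x : ℂ)}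

/-- `α(h) = inf_{η ∈ Ker L₀} sup_{t ∈ [0,1]} |t^μ − η(1+th)|`. -/
def alphaFn (μ h : ℝ) : ℝ :=
  sInf {v : ℝ | ∃ η ∈ KerL0,
    v = sSup ((fun t : ℝ => ‖((t ^ μ : ℝ) : ℂ) - η (1 + t * h)‖) '' Set.Icc (0 : ℝ) 1)}

/-! Write `G = F - S`, so that `‖F‖² = ‖S‖² + ‖G‖² + 2 Re ⟨G, S⟩`. The cross term vanishes: where
`S` is in `Ker L₀`, with coefficient `b` on `x² ln x`, the moment `x S″` satisfies
`(x S″)′ = S′ / x + 4 b`, so integration by parts turns `⟨G, S⟩` on that piece into the increment of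
`conj (x S″) G′` minus `4 conj b` times the increment of `G`. The latter product is zero because `G`
vanishes at `0` and at the knots, and `b = 0` on the last piece; the former increments telescope
because `S` is `C²`. What remains tends to zero at `0` and at `∞`: there `x S″ → 0`, while `G′` is
bounded, since the derivative of `|G′|²` is dominated by the energy density. Hence
`‖F‖² = ‖S‖² + ‖G‖²`, and `‖G‖ = 0` would make `G` constant, so zero. -/

section AbsolutelyContinuous

variable {E : Type*} [NormedAddCommGroup E] {a b : ℝ}

lemma absolutelyContinuousOnInterval_comp_of_lipschitzWith {X Y : Type*} [PseudoMetricSpace X]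
    [PseudoMetricSpace Y] {K : NNReal} {g : X → Y} {f : ℝ → X} (hg : LipschitzWith K g)
    (hf : AbsolutelyContinuousOnInterval f a b) :
    AbsolutelyContinuousOnInterval (fun x => g (f x)) a b := by
  refine squeeze_zero (fun I => Finset.sum_nonneg fun i _ => dist_nonneg) (fun I => ?_)
    (by simpa using Tendsto.const_mul (K : ℝ) hf)
  rw [Finset.mul_sum]
  exact Finset.sum_le_sum fun i _ => hg.dist_le_mul _ _

variable [NormedSpace ℝ E] {f f' : ℝ → E}

lemma absolutelyContinuousOnInterval_of_eq_integral (hf' : IntervalIntegrable f' volume a b)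
    (hf : ∀ x ∈ uIcc a b, f x = f a + ∫ t in a..x, f' t) :
    AbsolutelyContinuousOnInterval f a b := by
  have hnorm : AbsolutelyContinuousOnInterval (fun x => ∫ t in a..x, ‖f' t‖) a b :=
    hf'.norm.absolutelyContinuousOnInterval_intervalIntegral left_mem_uIcc
  rw [absolutelyContinuousOnInterval_iff] at hnorm ⊢
  intro ε hε
  obtain ⟨δ, hδ, hI⟩ := hnorm ε hε
  refine ⟨δ, hδ, fun I hIab hIδ => (Finset.sum_le_sum fun i hi => ?_).trans_lt (hI I hIab hIδ)⟩
  obtain ⟨hx, hy⟩ := hIab.1 i hi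
  have hint : ∀ z ∈ uIcc a b, IntervalIntegrable f' volume a z := fun z hz =>
    hf'.mono_set (uIcc_subset_uIcc_left hz)
  rw [dist_eq_norm, dist_eq_norm, hf _ hx, hf _ hy, add_sub_add_left_eq_sub,
    intervalIntegral.integral_interval_sub_left (hint _ hx) (hint _ hy),
    intervalIntegral.integral_interval_sub_left (hint _ hx).norm (hint _ hy).norm]
  exact intervalIntegral.norm_integral_le_abs_integral_norm

variable [CompleteSpace E]

lemma ae_hasDerivAt_of_eq_integral (hf' : IntervalIntegrable f' volume a b)
    (hf : ∀ x ∈ uIcc a b, f x = f a + ∫ t in a..x, f' t) :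
    ∀ᵐ x, x ∈ uIcc a b → HasDerivAt f (f' x) x := by
  filter_upwards [hf'.ae_hasDerivAt_integral, Measure.ae_ne volume (min a b),
    Measure.ae_ne volume (max a b)] with x hx hmin hmax hxab
  refine ((hx hxab a left_mem_uIcc).const_add (f a)).congr_of_eventuallyEq ?_
  filter_upwards [Icc_mem_nhds (hxab.1.lt_of_ne' hmin) (hxab.2.lt_of_ne hmax)] with y hy
  exact hf y hy

lemma absolutelyContinuousOnInterval_of_hasDerivAt (hf' : ContinuousOn f' (uIcc a b))
    (hderiv : ∀ x ∈ uIcc a b, HasDerivAt f (f' x) x) : AbsolutelyContinuousOnInterval f a b := by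
  refine absolutelyContinuousOnInterval_of_eq_integral hf'.intervalIntegrable fun x hx => ?_
  have hax : uIcc a x ⊆ uIcc a b := uIcc_subset_uIcc_left hx
  rw [intervalIntegral.integral_eq_sub_of_hasDerivAt (fun t ht => hderiv t (hax ht))
    (hf'.mono hax).intervalIntegrable, add_sub_cancel]

lemma integral_eq_sub_of_ae_hasDerivAt (hf : AbsolutelyContinuousOnInterval f a b)
    (hf' : IntervalIntegrable f' volume a b)
    (hderiv : ∀ᵐ x, x ∈ uIcc a b → HasDerivAt f (f' x) x) :
    ∫ x in a..b, f' x = f b - f a := by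
  have hsub : AbsolutelyContinuousOnInterval (fun x => f x - ∫ t in a..x, f' t) a b :=
    hf.fun_sub (absolutelyContinuousOnInterval_of_eq_integral hf' (by simp))
  obtain ⟨C, hC⟩ := hsub.const_of_ae_hasDerivAt_zero (by
    filter_upwards [hderiv, hf'.ae_hasDerivAt_integral] with x hfx hint hx
    simpa using (hfx hx).fun_sub (hint hx a left_mem_uIcc))
  have hends := (hC b right_mem_uIcc).trans (hC a left_mem_uIcc).symm
  rw [intervalIntegral.integral_same, sub_zero] at hends
  rw [← hends, sub_sub_cancel]

end AbsolutelyContinuous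

namespace Lambda0

/-- The energy density of `F`, whose integral over `(0,∞)` is `energySq F.f' F.f''`. -/
def energyDensity (F : Lambda0) (r : ℝ) : ℝ :=
  r * ‖F.f'' r‖ ^ 2 + (1 / r) * ‖F.f' r‖ ^ 2

/-- The integrand of the semi-inner product `innerBL F G`. -/
def innerDensity (F G : Lambda0) (r : ℝ) : ℂ :=
  (r : ℂ) * F.f'' r * (starRingEnd ℂ) (G.f'' r) +
    (1 / (r : ℂ)) * F.f' r * (starRingEnd ℂ) (G.f' r)

section Regularity

variable (F : Lambda0) {a b : ℝ}

lemma intervalIntegrable_f'' (ha : 0 < a) (hab : a ≤ b) :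
    IntervalIntegrable F.f'' volume a b :=
  (intervalIntegrable_iff_integrableOn_Icc_of_le hab).2 (F.locAC a b ha hab).1

lemma absolutelyContinuousOnInterval_f' (ha : 0 < a) (hab : a ≤ b) :
    AbsolutelyContinuousOnInterval F.f' a b :=
  absolutelyContinuousOnInterval_of_eq_integral (F.intervalIntegrable_f'' ha hab)
    (uIcc_of_le hab ▸ (F.locAC a b ha hab).2)

lemma ae_hasDerivAt_f' (ha : 0 < a) (hab : a ≤ b) :
    ∀ᵐ x, x ∈ uIcc a b → HasDerivAt F.f' (F.f'' x) x :=
  ae_hasDerivAt_of_eq_integral (F.intervalIntegrable_f'' ha hab)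
    (uIcc_of_le hab ▸ (F.locAC a b ha hab).2)

lemma absolutelyContinuousOnInterval_f (ha : 0 < a) (hb : 0 < b) :
    AbsolutelyContinuousOnInterval F.f a b := by
  have hpos : uIcc a b ⊆ Ioi 0 := fun x hx => (lt_min ha hb).trans_le hx.1
  exact absolutelyContinuousOnInterval_of_hasDerivAt (F.contDeriv.mono hpos)
    fun x hx => F.hasDeriv x (hpos hx)

lemma aestronglyMeasurable_f' : AEStronglyMeasurable F.f' (volume.restrict (Ioi 0)) :=
  F.contDeriv.aestronglyMeasurable measurableSet_Ioi

lemma aestronglyMeasurable_f'' : AEStronglyMeasurable F.f'' (volume.restrict (Ioi 0)) := by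
  refine LocallyIntegrableOn.aestronglyMeasurable fun x (hx : 0 < x) => ?_
  have hnhds : Icc (x / 2) (x + 1) ∈ nhds x := Icc_mem_nhds (by linarith) (by linarith)
  exact ⟨_, mem_nhdsWithin_of_mem_nhds hnhds, (F.locAC _ _ (by positivity) (by linarith)).1⟩

end Regularity

section Energy

lemma energyDensity_nonneg (F : Lambda0) {r : ℝ} (hr : 0 < r) : 0 ≤ F.energyDensity r := by
  unfold energyDensity
  positivity

lemma energySq_nonneg (F : Lambda0) : 0 ≤ energySq F.f' F.f'' :=
  setIntegral_nonneg measurableSet_Ioi fun _ hr => F.energyDensity_nonneg hr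

lemma integrableOn_energyDensity_sub (F G : Lambda0) :
    IntegrableOn (fun r => r * ‖F.f'' r - G.f'' r‖ ^ 2 + (1 / r) * ‖F.f' r - G.f' r‖ ^ 2)
      (Ioi 0) := by
  refine ((F.energyFin.const_mul 2).add (G.energyFin.const_mul 2)).mono' ?_ ?_
  · have hf'' := F.aestronglyMeasurable_f''.sub G.aestronglyMeasurable_f''
    have hf' := F.aestronglyMeasurable_f'.sub G.aestronglyMeasurable_f'
    have hinv : Measurable fun r : ℝ => 1 / r := by fun_prop
    exact (measurable_id.aestronglyMeasurable.mul (hf''.norm.pow 2)).add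
      (hinv.aestronglyMeasurable.mul (hf'.norm.pow 2))
  · filter_upwards [ae_restrict_mem measurableSet_Ioi] with r (hr : 0 < r)
    have hsq : ∀ z w : ℂ, ‖z - w‖ ^ 2 ≤ 2 * (‖z‖ ^ 2 + ‖w‖ ^ 2) := fun z w => by
      linarith [parallelogram_law_with_norm ℝ z w, sq_nonneg ‖z + w‖]
    rw [Real.norm_of_nonneg (by positivity)]
    calc r * ‖F.f'' r - G.f'' r‖ ^ 2 + 1 / r * ‖F.f' r - G.f' r‖ ^ 2
        ≤ r * (2 * (‖F.f'' r‖ ^ 2 + ‖G.f'' r‖ ^ 2))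
          + 1 / r * (2 * (‖F.f' r‖ ^ 2 + ‖G.f' r‖ ^ 2)) := by gcongr <;> apply hsq
      _ = _ := by simp only [Pi.add_apply]; ring

instance : Sub Lambda0 where
  sub F G :=
    { f := F.f - G.f
      f' := F.f' - G.f'
      f'' := F.f'' - G.f''
      hasDeriv := fun r hr => (F.hasDeriv r hr).sub (G.hasDeriv r hr)
      contDeriv := F.contDeriv.sub G.contDeriv
      locAC := fun a b ha hab => by
        refine ⟨(F.locAC a b ha hab).1.sub (G.locAC a b ha hab).1, fun x hx => ?_⟩
        simp only [Pi.sub_apply]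
        rw [intervalIntegral.integral_sub (F.intervalIntegrable_f'' ha hx.1)
          (G.intervalIntegrable_f'' ha hx.1), (F.locAC a b ha hab).2 x hx,
          (G.locAC a b ha hab).2 x hx]
        ring
      energyFin := F.integrableOn_energyDensity_sub G }

@[simp] lemma sub_f (F G : Lambda0) : (F - G).f = F.f - G.f := rfl

@[simp] lemma sub_f' (F G : Lambda0) : (F - G).f' = F.f' - G.f' := rfl

@[simp] lemma sub_f'' (F G : Lambda0) : (F - G).f'' = F.f'' - G.f'' := rfl

lemma norm_innerDensity_le (F G : Lambda0) {r : ℝ} (hr : 0 < r) :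
    ‖F.innerDensity G r‖ ≤ F.energyDensity r + G.energyDensity r := by
  have amgm : ∀ z w : ℂ, ‖z‖ * ‖w‖ ≤ ‖z‖ ^ 2 + ‖w‖ ^ 2 := fun z w => by
    nlinarith [two_mul_le_add_sq ‖z‖ ‖w‖, norm_nonneg z, norm_nonneg w]
  calc ‖F.innerDensity G r‖
      ≤ r * (‖F.f'' r‖ * ‖G.f'' r‖) + 1 / r * (‖F.f' r‖ * ‖G.f' r‖) := by
        refine (norm_add_le _ _).trans_eq ?_
        simp only [norm_mul, norm_div, norm_one, Complex.norm_real, RCLike.norm_conj,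
          Real.norm_of_nonneg hr.le, mul_assoc]
    _ ≤ r * (‖F.f'' r‖ ^ 2 + ‖G.f'' r‖ ^ 2) + 1 / r * (‖F.f' r‖ ^ 2 + ‖G.f' r‖ ^ 2) := by
        gcongr <;> apply amgm
    _ = F.energyDensity r + G.energyDensity r := by unfold energyDensity; ring

lemma integrableOn_innerDensity (F G : Lambda0) : IntegrableOn (F.innerDensity G) (Ioi 0) := by
  refine (F.energyFin.add G.energyFin).mono' ?_ ?_
  · have hconj : Continuous (starRingEnd ℂ) := Complex.continuous_conj
    have hid : Measurable fun r : ℝ => (r : ℂ) := by fun_prop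
    have hinv : Measurable fun r : ℝ => 1 / (r : ℂ) := by fun_prop
    exact ((hid.aestronglyMeasurable.mul F.aestronglyMeasurable_f'').mul
        (hconj.comp_aestronglyMeasurable G.aestronglyMeasurable_f'')).add
      ((hinv.aestronglyMeasurable.mul F.aestronglyMeasurable_f').mul
        (hconj.comp_aestronglyMeasurable G.aestronglyMeasurable_f'))
  · filter_upwards [ae_restrict_mem measurableSet_Ioi] with r hr
    exact F.norm_innerDensity_le G hr

lemma intervalIntegrable_innerDensity (F G : Lambda0) {a b : ℝ} (ha : 0 ≤ a) (hb : 0 ≤ b) :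
    IntervalIntegrable (F.innerDensity G) volume a b :=
  intervalIntegrable_iff.2 <| (F.integrableOn_innerDensity G).mono_set fun _ hx =>
    (le_min ha hb).trans_lt hx.1

lemma energyDensity_eq_add (F G : Lambda0) (r : ℝ) :
    F.energyDensity r
      = G.energyDensity r + (F - G).energyDensity r + 2 * ((F - G).innerDensity G r).re := by
  have hsq : ∀ z w : ℂ, ‖z‖ ^ 2
      = ‖w‖ ^ 2 + ‖z - w‖ ^ 2 + 2 * ((z - w) * (starRingEnd ℂ) w).re := fun z w => by
    have h := Complex.normSq_add (z - w) w
    rw [sub_add_cancel] at h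
    simp only [← Complex.normSq_eq_norm_sq, h]
    ring
  have hre : ((F - G).innerDensity G r).re
      = r * ((F.f'' r - G.f'' r) * (starRingEnd ℂ) (G.f'' r)).re
        + 1 / r * ((F.f' r - G.f' r) * (starRingEnd ℂ) (G.f' r)).re := by
    rw [← Complex.re_ofReal_mul, ← Complex.re_ofReal_mul, ← Complex.add_re]
    simp only [innerDensity, sub_f', sub_f'', Pi.sub_apply, Complex.ofReal_div, Complex.ofReal_one,
      mul_assoc]
  rw [hre]
  simp only [energyDensity, sub_f', sub_f'', Pi.sub_apply]
  rw [hsq (F.f'' r) (G.f'' r), hsq (F.f' r) (G.f' r)]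
  ring

lemma energySq_eq_add (F G : Lambda0) :
    energySq F.f' F.f''
      = energySq G.f' G.f'' + energySq (F - G).f' (F - G).f'' + 2 * (innerBL (F - G) G).re := by
  have hinner := (F - G).integrableOn_innerDensity G
  have hre : (innerBL (F - G) G).re = ∫ r in Ioi (0 : ℝ), ((F - G).innerDensity G r).re :=
    (integral_re hinner).symm
  calc energySq F.f' F.f''
      = ∫ r in Ioi (0 : ℝ), (G.energyDensity r + (F - G).energyDensity r
          + 2 * ((F - G).innerDensity G r).re) :=
        integral_congr_ae (Eventually.of_forall (F.energyDensity_eq_add G))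
    _ = (∫ r in Ioi (0 : ℝ), (G.energyDensity r + (F - G).energyDensity r))
          + ∫ r in Ioi (0 : ℝ), 2 * ((F - G).innerDensity G r).re :=
        integral_add (G.energyFin.add (F - G).energyFin) (hinner.re.const_mul 2)
    _ = energySq G.f' G.f'' + energySq (F - G).f' (F - G).f'' + 2 * (innerBL (F - G) G).re := by
        rw [hre, integral_const_mul]
        exact congrArg (· + _) (integral_add G.energyFin (F - G).energyFin)

lemma f'_eq_zero_of_energySq_eq_zero (F : Lambda0) (hF : energySq F.f' F.f'' = 0) :
    EqOn F.f' 0 (Ioi 0) := by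
  have hnonneg : 0 ≤ᵐ[volume.restrict (Ioi 0)] F.energyDensity := by
    filter_upwards [ae_restrict_mem measurableSet_Ioi] with r hr using F.energyDensity_nonneg hr
  have hdensity := (setIntegral_eq_zero_iff_of_nonneg_ae hnonneg F.energyFin).1 hF
  refine Measure.eqOn_open_of_ae_eq (μ := volume) ?_ isOpen_Ioi F.contDeriv continuousOn_const
  filter_upwards [hdensity, ae_restrict_mem measurableSet_Ioi] with r hr (hr0 : 0 < r)
  have hsum := (add_eq_zero_iff_of_nonneg (by positivity) (by positivity)).1 hr
  simpa [hr0.ne'] using hsum.2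

lemma eqOn_of_energySq_sub_eq_zero (F G : Lambda0) {p : ℝ} (hp : 0 < p) (hFG : F.f p = G.f p)
    (h : energySq (F - G).f' (F - G).f'' = 0) : EqOn F.f G.f (Ioi 0) := by
  have hderiv : EqOn (deriv (F - G).f) 0 (Ioi 0) := fun x hx =>
    ((F - G).hasDeriv x hx).deriv.trans ((F - G).f'_eq_zero_of_energySq_eq_zero h hx)
  intro x hx
  have hconst : (F - G).f x = (F - G).f p :=
    isOpen_Ioi.is_const_of_deriv_eq_zero isPreconnected_Ioi
      (fun y hy => ((F - G).hasDeriv y hy).differentiableAt.differentiableWithinAt) hderiv hx hp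
  simpa [hFG, sub_eq_zero] using hconst

end Energy

section BoundedDerivative

lemma two_mul_abs_inner_le_energyDensity (F : Lambda0) {r : ℝ} (hr : 0 < r) :
    |2 * inner ℝ (F.f' r) (F.f'' r)| ≤ F.energyDensity r := by
  have hsqrt : √r ≠ 0 := (Real.sqrt_pos.2 hr).ne'
  calc |2 * inner ℝ (F.f' r) (F.f'' r)|
      ≤ 2 * (‖F.f' r‖ * ‖F.f'' r‖) := by
        rw [abs_mul, abs_two]
        gcongr
        exact abs_real_inner_le_norm _ _
    _ = 2 * (√r * ‖F.f'' r‖) * (‖F.f' r‖ / √r) := by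
        rw [mul_assoc, mul_right_comm (√r), mul_div_cancel₀ _ hsqrt]
    _ ≤ (√r * ‖F.f'' r‖) ^ 2 + (‖F.f' r‖ / √r) ^ 2 := two_mul_le_add_sq _ _
    _ = F.energyDensity r := by
        rw [energyDensity, mul_pow, div_pow, Real.sq_sqrt hr.le]
        ring

lemma abs_norm_sq_f'_sub_le (F : Lambda0) {a b : ℝ} (ha : 0 < a) (hab : a ≤ b) :
    |‖F.f' b‖ ^ 2 - ‖F.f' a‖ ^ 2| ≤ energySq F.f' F.f'' := by
  have hac : AbsolutelyContinuousOnInterval F.f' a b := F.absolutelyContinuousOnInterval_f' ha hab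
  have hnorm := absolutelyContinuousOnInterval_comp_of_lipschitzWith lipschitzWith_one_norm hac
  have hsq : AbsolutelyContinuousOnInterval (fun x => ‖F.f' x‖ ^ 2) a b := by
    simpa only [sq] using hnorm.fun_mul hnorm
  have hpos : Icc a b ⊆ Ioi 0 := fun x hx => ha.trans_le hx.1
  have hbound : ∀ x ∈ Ioc a b, ‖2 * inner ℝ (F.f' x) (F.f'' x)‖ ≤ F.energyDensity x :=
    fun x hx => F.two_mul_abs_inner_le_energyDensity (ha.trans hx.1)
  have hdensity : IntegrableOn F.energyDensity (Ioc a b) :=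
    F.energyFin.mono_set (Ioc_subset_Icc_self.trans hpos)
  have hint : IntervalIntegrable (fun x => 2 * inner ℝ (F.f' x) (F.f'' x)) volume a b := by
    refine (intervalIntegrable_iff_integrableOn_Ioc_of_le hab).2 (hdensity.mono' ?_ ?_)
    · exact ((F.aestronglyMeasurable_f'.inner F.aestronglyMeasurable_f'').const_mul 2).mono_set
        (Ioc_subset_Icc_self.trans hpos)
    · filter_upwards [ae_restrict_mem measurableSet_Ioc] with x hx using hbound x hx
  calc |‖F.f' b‖ ^ 2 - ‖F.f' a‖ ^ 2|
      = ‖∫ x in a..b, 2 * inner ℝ (F.f' x) (F.f'' x)‖ := by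
        rw [integral_eq_sub_of_ae_hasDerivAt hsq hint
          ((F.ae_hasDerivAt_f' ha hab).mono fun x hx hxab => (hx hxab).norm_sq), Real.norm_eq_abs]
    _ ≤ ∫ x in a..b, F.energyDensity x :=
        intervalIntegral.norm_integral_le_of_norm_le hab (Eventually.of_forall hbound)
          ((intervalIntegrable_iff_integrableOn_Ioc_of_le hab).2 hdensity)
    _ ≤ energySq F.f' F.f'' := by
        rw [intervalIntegral.integral_of_le hab]
        refine setIntegral_mono_set F.energyFin ?_
          (Ioc_subset_Icc_self.trans hpos).eventuallyLE
        filter_upwards [ae_restrict_mem measurableSet_Ioi] with x hx using F.energyDensity_nonneg hx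

lemma exists_norm_f'_le (F : Lambda0) : ∃ C, ∀ x, 0 < x → ‖F.f' x‖ ≤ C := by
  refine ⟨√(‖F.f' 1‖ ^ 2 + energySq F.f' F.f''), fun x hx => Real.le_sqrt_of_sq_le ?_⟩
  rcases le_total x 1 with h | h
  · linarith [neg_abs_le (‖F.f' 1‖ ^ 2 - ‖F.f' x‖ ^ 2), F.abs_norm_sq_f'_sub_le hx h]
  · linarith [le_abs_self (‖F.f' x‖ ^ 2 - ‖F.f' 1‖ ^ 2), F.abs_norm_sq_f'_sub_le one_pos h]

end BoundedDerivative

end Lambda0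

section Kernel

/-- The element of `Ker L₀` with coefficients `a, b, c, d` on `x²`, `x² ln x`, `1`, `ln x`. -/
def kerL0Fun (a b c d : ℂ) (x : ℝ) : ℂ :=
  a * (x : ℂ) ^ 2 + b * (x : ℂ) ^ 2 * (Real.log x : ℂ) + c + d * (Real.log x : ℂ)

/-- The derivative of `kerL0Fun a b c d`. -/
def kerL0Deriv (a b d : ℂ) (x : ℝ) : ℂ :=
  2 * a * x + b * (2 * x * Real.log x + x) + d / x

/-- The moment `x * η″(x)` of `η = kerL0Fun a b c d`. -/
def kerL0Moment (a b d : ℂ) (x : ℝ) : ℂ :=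
  2 * a * x + b * (2 * x * Real.log x + 3 * x) - d / x

variable (a b c d : ℂ) {x : ℝ}

lemma hasDerivAt_ofReal_log (hx : 0 < x) :
    HasDerivAt (fun y : ℝ => (Real.log y : ℂ)) (1 / x) x := by
  simpa using (Real.hasDerivAt_log hx.ne').ofReal_comp

lemma hasDerivAt_const_div_ofReal (hx : 0 < x) :
    HasDerivAt (fun y : ℝ => d / (y : ℂ)) (-d / x ^ 2) x := by
  simpa using (hasDerivAt_const x d).fun_div (hasDerivAt_id x).ofReal_comp
    (Complex.ofReal_ne_zero.2 hx.ne')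

lemma hasDerivAt_kerL0Fun (hx : 0 < x) :
    HasDerivAt (kerL0Fun a b c d) (kerL0Deriv a b d x) x := by
  have hx' : (x : ℂ) ≠ 0 := Complex.ofReal_ne_zero.2 hx.ne'
  have hsq := (hasDerivAt_id x).ofReal_comp.fun_pow 2
  have hlog := hasDerivAt_ofReal_log hx
  refine ((((hsq.const_mul a).fun_add ((hsq.const_mul b).fun_mul hlog)).add_const c).fun_add
    (hlog.const_mul d)).congr_deriv ?_
  simp only [kerL0Deriv, id_eq, Complex.ofReal_one]
  field_simp
  ring

lemma hasDerivAt_kerL0Deriv (hx : 0 < x) :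
    HasDerivAt (kerL0Deriv a b d) (kerL0Moment a b d x / x) x := by
  have hx' : (x : ℂ) ≠ 0 := Complex.ofReal_ne_zero.2 hx.ne'
  have hid := (hasDerivAt_id x).ofReal_comp
  have hlog := hasDerivAt_ofReal_log hx
  refine (((hid.const_mul (2 * a)).fun_add
    ((((hid.const_mul 2).fun_mul hlog).fun_add hid).const_mul b)).fun_add
    (hasDerivAt_const_div_ofReal d hx)).congr_deriv ?_
  simp only [kerL0Moment, id_eq, Complex.ofReal_one]
  field_simp
  ring

lemma hasDerivAt_kerL0Moment (hx : 0 < x) :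
    HasDerivAt (kerL0Moment a b d) (kerL0Deriv a b d x / x + 4 * b) x := by
  have hx' : (x : ℂ) ≠ 0 := Complex.ofReal_ne_zero.2 hx.ne'
  have hid := (hasDerivAt_id x).ofReal_comp
  have hlog := hasDerivAt_ofReal_log hx
  refine (((hid.const_mul (2 * a)).fun_add
    ((((hid.const_mul 2).fun_mul hlog).fun_add (hid.const_mul 3)).const_mul b)).fun_sub
    (hasDerivAt_const_div_ofReal d hx)).congr_deriv ?_
  simp only [kerL0Deriv, id_eq, Complex.ofReal_one]
  field_simp
  ring

lemma continuousOn_kerL0Moment : ContinuousOn (kerL0Moment a b d) (Ioi 0) := fun _ hx =>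
  (hasDerivAt_kerL0Moment a b d hx).continuousAt.continuousWithinAt

lemma absolutelyContinuousOnInterval_kerL0Moment {p q : ℝ} (hp : 0 < p) (hq : 0 < q) :
    AbsolutelyContinuousOnInterval (kerL0Moment a b d) p q := by
  have hpos : ∀ x ∈ uIcc p q, 0 < x := fun x hx => (lt_min hp hq).trans_le hx.1
  refine absolutelyContinuousOnInterval_of_hasDerivAt (fun x hx => ?_)
    fun x hx => hasDerivAt_kerL0Moment a b d (hpos x hx)
  have hderiv := (hasDerivAt_kerL0Deriv a b d (hpos x hx)).continuousAt
  have hx' : (x : ℂ) ≠ 0 := Complex.ofReal_ne_zero.2 (hpos x hx).ne'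
  exact ((hderiv.div Complex.continuous_ofReal.continuousAt hx').add
    continuousAt_const).continuousWithinAt

lemma tendsto_kerL0Moment_nhdsGT_zero :
    Tendsto (kerL0Moment a b 0) (nhdsWithin 0 (Ioi 0)) (nhds 0) := by
  have hofReal : Tendsto (fun x : ℝ => (x : ℂ)) (nhds 0) (nhds 0) :=
    Complex.continuous_ofReal.tendsto' 0 0 Complex.ofReal_zero
  have hlog : Tendsto (fun x : ℝ => (x : ℂ) * Real.log x) (nhds 0) (nhds 0) := by
    simpa [Function.comp_def] using hofReal.comp (Real.continuous_mul_log.tendsto' 0 0 (by simp))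
  have h := (hofReal.const_mul (2 * a)).add
    (((hlog.const_mul 2).add (hofReal.const_mul 3)).const_mul b)
  unfold kerL0Moment
  simpa [mul_assoc] using h.mono_left nhdsWithin_le_nhds

lemma tendsto_kerL0Moment_atTop : Tendsto (kerL0Moment 0 0 d) atTop (nhds 0) := by
  have hinv : Tendsto (fun x : ℝ => ((x⁻¹ : ℝ) : ℂ)) atTop (nhds 0) :=
    (Complex.continuous_ofReal.tendsto' 0 0 Complex.ofReal_zero).comp tendsto_inv_atTop_zero
  unfold kerL0Moment
  simpa [div_eq_mul_inv] using (hinv.const_mul d).neg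

end Kernel

namespace Lambda0

/-- The moment `x * S″(x)`. The density `S.f''` is determined only almost everywhere, so the second
derivative is taken as `deriv S.f'`, which exists everywhere when `S` is a spline. -/
def moment (S : Lambda0) (x : ℝ) : ℂ :=
  x * deriv S.f' x

section Moment

variable {S : Lambda0} {a b c d : ℂ} {U : Set ℝ}

lemma eqOn_f'_kerL0Deriv (hUo : IsOpen U) (hU : U ⊆ Ioi 0) (hS : EqOn S.f (kerL0Fun a b c d) U) :
    EqOn S.f' (kerL0Deriv a b d) U := fun x hx =>
  (S.hasDeriv x (hU hx)).unique <| (hasDerivAt_kerL0Fun a b c d (hU hx)).congr_of_eventuallyEq <|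
    hS.eventuallyEq_of_mem (hUo.mem_nhds hx)

lemma eqOn_moment_kerL0Moment (hUo : IsOpen U) (hU : U ⊆ Ioi 0)
    (hS : EqOn S.f (kerL0Fun a b c d) U) : EqOn S.moment (kerL0Moment a b d) U := fun x hx => by
  have hx' : (x : ℂ) ≠ 0 := Complex.ofReal_ne_zero.2 (hU hx : 0 < x).ne'
  rw [moment, (eqOn_f'_kerL0Deriv hUo hU hS).deriv hUo hx,
    (hasDerivAt_kerL0Deriv a b d (hU hx)).deriv, mul_div_cancel₀ _ hx']

lemma continuousOn_moment (hS : ContDiffOn ℝ 2 S.f (Ioi 0)) :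
    ContinuousOn S.moment (Ioi 0) := by
  have hderiv : ContDiffOn ℝ 1 (deriv S.f) (Ioi 0) :=
    ((contDiffOn_succ_iff_deriv_of_isOpen (n := 1) isOpen_Ioi).1
      (by rwa [one_add_one_eq_two])).2.2
  have hf' : ContDiffOn ℝ 1 S.f' (Ioi 0) :=
    hderiv.congr fun x hx => (S.hasDeriv x hx).deriv.symm
  exact Complex.continuous_ofReal.continuousOn.mul
    (hf'.continuousOn_deriv_of_isOpen isOpen_Ioi le_rfl)

end Moment

/-- The boundary term produced at `x` by integrating `innerDensity G S` by parts. -/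
def boundaryTerm (G S : Lambda0) (x : ℝ) : ℂ :=
  (starRingEnd ℂ) (S.moment x) * G.f' x

section Pieces

variable (G : Lambda0) {S : Lambda0} {a b c d : ℂ} {p q : ℝ}

lemma hasDerivAt_conj_kerL0Moment_mul_f' {x : ℝ} (hx : 0 < x)
    (hG : HasDerivAt G.f' (G.f'' x) x) :
    HasDerivAt (fun y => (starRingEnd ℂ) (kerL0Moment a b d y) * G.f' y
        - 4 * (starRingEnd ℂ) b * G.f y)
      ((starRingEnd ℂ) (kerL0Moment a b d x) * G.f'' x
        + (1 / (x : ℂ)) * G.f' x * (starRingEnd ℂ) (kerL0Deriv a b d x)) x := by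
  refine (((hasDerivAt_kerL0Moment a b d hx).star.fun_mul hG).fun_sub
    ((G.hasDeriv x hx).const_mul (4 * (starRingEnd ℂ) b))).congr_deriv ?_
  simp only [← starRingEnd_apply, map_add, map_div₀, map_mul, map_ofNat, Complex.conj_ofReal]
  ring

lemma innerDensity_eq_of_eqOn {U : Set ℝ} (hUo : IsOpen U) (hU : U ⊆ Ioi 0)
    (hS : EqOn S.f (kerL0Fun a b c d) U) {x : ℝ} (hx : x ∈ U)
    (hSx : HasDerivAt S.f' (S.f'' x) x) :
    G.innerDensity S x = (starRingEnd ℂ) (kerL0Moment a b d x) * G.f'' x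
      + (1 / (x : ℂ)) * G.f' x * (starRingEnd ℂ) (kerL0Deriv a b d x) := by
  rw [innerDensity, ← eqOn_moment_kerL0Moment hUo hU hS hx, ← eqOn_f'_kerL0Deriv hUo hU hS hx,
    moment, hSx.deriv, map_mul, Complex.conj_ofReal]
  ring

lemma integral_innerDensity_eq_kerL0Moment (hp : 0 < p) (hpq : p ≤ q)
    (hS : EqOn S.f (kerL0Fun a b c d) (Ioo p q)) :
    ∫ x in p..q, G.innerDensity S x
      = (starRingEnd ℂ) (kerL0Moment a b d q) * G.f' q
        - (starRingEnd ℂ) (kerL0Moment a b d p) * G.f' p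
        - 4 * (starRingEnd ℂ) b * (G.f q - G.f p) := by
  have hq : 0 < q := hp.trans_le hpq
  have hconj : AbsolutelyContinuousOnInterval
      (fun x => (starRingEnd ℂ) (kerL0Moment a b d x)) p q :=
    absolutelyContinuousOnInterval_comp_of_lipschitzWith Complex.isometry_conj.lipschitz
      (absolutelyContinuousOnInterval_kerL0Moment a b d hp hq)
  have hac : AbsolutelyContinuousOnInterval (fun x => (starRingEnd ℂ) (kerL0Moment a b d x) * G.f' x
      - 4 * (starRingEnd ℂ) b * G.f x) p q :=
    (hconj.fun_smul (G.absolutelyContinuousOnInterval_f' hp hpq)).fun_sub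
      ((G.absolutelyContinuousOnInterval_f hp hq).const_smul (4 * (starRingEnd ℂ) b))
  rw [integral_eq_sub_of_ae_hasDerivAt hac
    (G.intervalIntegrable_innerDensity S hp.le hq.le)]
  · ring
  filter_upwards [G.ae_hasDerivAt_f' hp hpq, S.ae_hasDerivAt_f' hp hpq, Measure.ae_ne volume p,
    Measure.ae_ne volume q] with x hGx hSx hxp hxq hx
  have hx' := uIcc_of_le hpq ▸ hx
  have hmem : x ∈ Ioo p q := ⟨hx'.1.lt_of_ne' hxp, hx'.2.lt_of_ne hxq⟩
  have hpos : Ioo p q ⊆ Ioi 0 := fun y hy => hp.trans hy.1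
  rw [G.innerDensity_eq_of_eqOn isOpen_Ioo hpos hS hmem (hSx hx)]
  exact G.hasDerivAt_conj_kerL0Moment_mul_f' (hpos hmem) (hGx hx)

lemma integral_innerDensity_eq_boundaryTerm_sub (hSm : ContDiffOn ℝ 2 S.f (Ioi 0)) (hp : 0 < p)
    (hpq : p < q) (hS : EqOn S.f (kerL0Fun a b c d) (Ioo p q)) :
    ∫ x in p..q, G.innerDensity S x
      = G.boundaryTerm S q - G.boundaryTerm S p - 4 * (starRingEnd ℂ) b * (G.f q - G.f p) := by
  have hIcc : Icc p q ⊆ Ioi 0 := fun x hx => hp.trans_le hx.1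
  have hmoment : EqOn S.moment (kerL0Moment a b d) (Icc p q) :=
    (eqOn_moment_kerL0Moment isOpen_Ioo (Ioo_subset_Icc_self.trans hIcc) hS).of_subset_closure
      ((continuousOn_moment hSm).mono hIcc) ((continuousOn_kerL0Moment a b d).mono hIcc)
      Ioo_subset_Icc_self (closure_Ioo hpq.ne).ge
  rw [G.integral_innerDensity_eq_kerL0Moment hp hpq.le hS, boundaryTerm, boundaryTerm,
    hmoment (left_mem_Icc.2 hpq.le), hmoment (right_mem_Icc.2 hpq.le)]

lemma tendsto_boundaryTerm {l : Filter ℝ} (hl : ∀ᶠ x in l, 0 < x)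
    (hS : Tendsto S.moment l (nhds 0)) : Tendsto (G.boundaryTerm S) l (nhds 0) := by
  obtain ⟨C, hC⟩ := G.exists_norm_f'_le
  have hconj : Tendsto (fun x => (starRingEnd ℂ) (S.moment x)) l (nhds 0) :=
    (Complex.continuous_conj.tendsto' 0 0 (map_zero _)).comp hS
  exact hconj.zero_mul_isBoundedUnder_le (isBoundedUnder_of_eventually_le (hl.mono hC))

lemma integral_innerDensity_zero_left (hSm : ContDiffOn ℝ 2 S.f (Ioi 0)) (hp : 0 < p) {γ : ℂ}
    (hG : Tendsto G.f (nhdsWithin 0 (Ioi 0)) (nhds γ))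
    (hS : EqOn S.f (kerL0Fun a b c 0) (Ioo 0 p)) :
    ∫ x in 0..p, G.innerDensity S x
      = G.boundaryTerm S p - 4 * (starRingEnd ℂ) b * (G.f p - γ) := by
  have hmoment : Tendsto S.moment (nhdsWithin 0 (Ioi 0)) (nhds 0) :=
    (tendsto_kerL0Moment_nhdsGT_zero a b).congr' <|
      (eqOn_moment_kerL0Moment isOpen_Ioo Ioo_subset_Ioi_self hS).symm.eventuallyEq_of_mem
        (Ioo_mem_nhdsGT hp)
  have hboundary := G.tendsto_boundaryTerm self_mem_nhdsWithin hmoment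
  have hprimitive : Tendsto (fun ε => ∫ x in ε..p, G.innerDensity S x) (nhdsWithin 0 (Ioi 0))
      (nhds (∫ x in 0..p, G.innerDensity S x)) := by
    have hint : IntegrableOn (G.innerDensity S) (uIcc 0 p) :=
      (intervalIntegrable_iff').1 (G.intervalIntegrable_innerDensity S le_rfl hp.le)
    have hcont := intervalIntegral.continuousOn_primitive_interval_left hint 0 left_mem_uIcc
    exact hcont.mono_of_mem_nhdsWithin (uIcc_of_le hp.le ▸ Icc_mem_nhdsGT hp)
  have hlim := (hboundary.const_sub (G.boundaryTerm S p)).sub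
    ((hG.const_sub (G.f p)).const_mul (4 * (starRingEnd ℂ) b))
  rw [sub_zero] at hlim
  refine tendsto_nhds_unique hprimitive (hlim.congr' ?_)
  filter_upwards [Ioo_mem_nhdsGT hp] with ε hε
  exact (G.integral_innerDensity_eq_boundaryTerm_sub hSm hε.1 hε.2
    (hS.mono (Ioo_subset_Ioo_left hε.1.le))).symm

lemma integral_Ioi_innerDensity (hSm : ContDiffOn ℝ 2 S.f (Ioi 0)) (hp : 0 < p)
    (hS : EqOn S.f (kerL0Fun 0 0 c d) (Ioi p)) :
    ∫ x in Ioi p, G.innerDensity S x = -G.boundaryTerm S p := by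
  have hmoment : Tendsto S.moment atTop (nhds 0) :=
    (tendsto_kerL0Moment_atTop d).congr' <|
      (eqOn_moment_kerL0Moment isOpen_Ioi (Ioi_subset_Ioi hp.le) hS).symm.eventuallyEq_of_mem
        (Ioi_mem_atTop p)
  have hboundary := G.tendsto_boundaryTerm (eventually_gt_atTop 0) hmoment
  have hprimitive := intervalIntegral_tendsto_integral_Ioi p
    ((G.integrableOn_innerDensity S).mono_set (Ioi_subset_Ioi hp.le)) tendsto_id
  refine tendsto_nhds_unique hprimitive
    ((zero_sub (G.boundaryTerm S p) ▸ hboundary.sub_const (G.boundaryTerm S p)).congr' ?_)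
  filter_upwards [eventually_gt_atTop p] with q hq
  simp [G.integral_innerDensity_eq_boundaryTerm_sub hSm hp hq (hS.mono Ioo_subset_Ioi_self)]

end Pieces

section Spline

variable {G S : Lambda0} {n : ℕ} {r : ℕ → ℝ}

lemma integral_innerDensity_knots (hn : 1 ≤ n) (hpos : 0 < r 1)
    (hr : StrictMonoOn r (Icc 1 n)) (hS : IsBLSpline n r S.f)
    (hG : ∀ j ∈ Icc 1 n, G.f (r j) = 0) :
    ∫ x in r 1..r n, G.innerDensity S x = G.boundaryTerm S (r n) - G.boundaryTerm S (r 1) := by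
  have hr0 : ∀ j ∈ Icc 1 n, 0 < r j := fun j hj =>
    hpos.trans_le (hr.monotoneOn ⟨le_rfl, hn⟩ hj hj.1)
  have hmem : ∀ j ∈ Ico 1 n, j ∈ Icc 1 n ∧ j + 1 ∈ Icc 1 n := fun j hj =>
    ⟨⟨hj.1, hj.2.le⟩, ⟨by omega, hj.2⟩⟩
  rw [← intervalIntegral.sum_integral_adjacent_intervals_Ico hn fun j hj =>
    G.intervalIntegrable_innerDensity S (hr0 _ (hmem j hj).1).le (hr0 _ (hmem j hj).2).le,
    ← Finset.sum_Ico_sub (fun j => G.boundaryTerm S (r j)) hn]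
  refine Finset.sum_congr rfl fun j hj => ?_
  obtain ⟨hj, hj'⟩ := hmem j (Finset.mem_Ico.1 hj)
  obtain ⟨a, b, c, d, hpiece⟩ := hS.pieces j hj.1 hj'.2
  rw [G.integral_innerDensity_eq_boundaryTerm_sub hS.smooth (hr0 j hj)
    (hr hj hj' j.lt_succ_self) hpiece, hG j hj, hG _ hj', sub_self, mul_zero, sub_zero]

lemma innerBL_eq_zero (hn : 1 ≤ n) (hpos : 0 < r 1) (hr : StrictMonoOn r (Icc 1 n))
    (hS : IsBLSpline n r S.f) (hG : ∀ j ∈ Icc 1 n, G.f (r j) = 0)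
    (hG0 : Tendsto G.f (nhdsWithin 0 (Ioi 0)) (nhds 0)) : innerBL G S = 0 := by
  have hrn : 0 < r n := hpos.trans_le (hr.monotoneOn ⟨le_rfl, hn⟩ ⟨hn, le_rfl⟩ hn)
  obtain ⟨a, b, c, hleft⟩ := hS.left
  obtain ⟨c', d, hright⟩ := hS.right
  have hfirst : ∫ x in 0..r 1, G.innerDensity S x = G.boundaryTerm S (r 1) := by
    rw [G.integral_innerDensity_zero_left (a := a) (b := b) (c := c) hS.smooth hpos hG0 fun x hx =>
      by simp [kerL0Fun, hleft x hx], hG 1 ⟨le_rfl, hn⟩, sub_zero, mul_zero, sub_zero]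
  have hlast : ∫ x in Ioi (r n), G.innerDensity S x = -G.boundaryTerm S (r n) :=
    G.integral_Ioi_innerDensity (c := c') (d := d) hS.smooth hrn fun x hx => by
      simp [kerL0Fun, hright x hx]
  have hint := G.integrableOn_innerDensity S
  calc innerBL G S
      = (∫ x in 0..r 1, G.innerDensity S x) + (∫ x in r 1..r n, G.innerDensity S x)
          + ∫ x in Ioi (r n), G.innerDensity S x := by
        rw [intervalIntegral.integral_add_adjacent_intervals
          (G.intervalIntegrable_innerDensity S le_rfl hpos.le)
          (G.intervalIntegrable_innerDensity S hpos.le hrn.le),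
          intervalIntegral.integral_interval_add_Ioi hint
            (hint.mono_set (Ioi_subset_Ioi hrn.le))]
        rfl
    _ = 0 := by
        rw [hfirst, integral_innerDensity_knots hn hpos hr hS hG, hlast]
        ring

end Spline

end Lambda0

theorem stmt6_general (n : ℕ) (r : ℕ → ℝ) (hn : 1 ≤ n) (hpos : 0 < r 1)
    (hmono : ∀ j, 1 ≤ j → j < n → r j < r (j + 1))
    (α : ℂ) (ν : ℕ → ℂ) (S F : Lambda0)
    (hS : IsBLSpline n r S.f)
    (hSv : ∀ j, 1 ≤ j → j ≤ n → S.f (r j) = ν j)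
    (hS0 : S.f 0 = α)
    (hFv : ∀ j, 1 ≤ j → j ≤ n → F.f (r j) = ν j)
    (hF0 : Tendsto F.f (nhdsWithin 0 (Ioi 0)) (nhds α))
    (hne : ¬ EqOn F.f S.f (Ioi 0)) :
    S.seminorm0 < F.seminorm0 := by
  have hr : StrictMonoOn r (Icc 1 n) :=
    strictMonoOn_of_lt_add_one ordConnected_Icc fun j _ hj hj' => hmono j hj.1 hj'.2
  have hknots : ∀ j ∈ Icc 1 n, (F - S).f (r j) = 0 := fun j hj => by
    simp [hFv j hj.1 hj.2, hSv j hj.1 hj.2]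
  have hS0' : Tendsto S.f (nhdsWithin 0 (Ioi 0)) (nhds α) :=
    hS0 ▸ hS.cont0.mono_left (nhdsWithin_mono 0 Ioi_subset_Ici_self)
  have hzero : Tendsto (F - S).f (nhdsWithin 0 (Ioi 0)) (nhds 0) := sub_self α ▸ hF0.sub hS0'
  have horth : innerBL (F - S) S = 0 := Lambda0.innerBL_eq_zero hn hpos hr hS hknots hzero
  have hdiff : 0 < energySq (F - S).f' (F - S).f'' :=
    (F - S).energySq_nonneg.lt_of_ne' fun h =>
      hne (F.eqOn_of_energySq_sub_eq_zero S hpos ((hFv 1 le_rfl hn).trans (hSv 1 le_rfl hn).symm) h)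
  have hpythagoras :
      energySq F.f' F.f'' = energySq S.f' S.f'' + energySq (F - S).f' (F - S).f'' := by
    rw [F.energySq_eq_add S, horth, Complex.zero_re, mul_zero, add_zero]
  exact Real.sqrt_lt_sqrt S.energySq_nonneg (hpythagoras ▸ lt_add_of_pos_right _ hdiff)

/-- variational characterization of `σ^A`: any `f ∈ Λ₀` matching the data
`ν j` at the knots and `α` at `0`, and different from `σ^A`, has strictly larger
seminorm. -/
theorem stmt6 (n : ℕ) (r : ℕ → ℝ) (hn : 1 ≤ n) (hpos : 0 < r 1)
    (hmono : ∀ j, 1 ≤ j → j < n → r j < r (j + 1))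
    (α : ℝ) (ν : ℕ → ℝ) (S F : Lambda0)
    (hS : IsBLSpline n r S.f)
    (hSv : ∀ j, 1 ≤ j → j ≤ n → S.f (r j) = (ν j : ℂ))
    (hS0 : S.f 0 = (α : ℂ))
    (hFv : ∀ j, 1 ≤ j → j ≤ n → F.f (r j) = (ν j : ℂ))
    (hF0 : Filter.Tendsto F.f (nhdsWithin 0 (Set.Ioi 0)) (nhds (α : ℂ)))
    (hne : ¬ Set.EqOn F.f S.f (Set.Ioi 0)) :
    S.seminorm0 < F.seminorm0 := by
  exact stmt6_general n r hn hpos hmono α (fun j => ν j) S F hS hSv hS0 hFv hF0 hne
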